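/- Let n ∈ ℕ and let x : (Fin n → Fin 4) → ℝ satisfy x(0) = 0, where 0 is the all-identity string. Define τ : (Fin n → Fin 4) → ℝ by τ(0) = 0 and, for b ≠ 0, τ(b) = −(2/4ⁿ) · Σ_a (−1)^{N(a,b)} x(a), the sum over all a : Fin n → Fin 4. Then for every a : Fin n → Fin 4, Σ_b ⟨a,b⟩ · τ(b) = x(a), where ⟨a,b⟩ ∈ {0,1} ⊆ ℝ is the symplectic indicator and the sum is over all b : Fin n → Fin 4. -/

import Mathlib

/-- Two single-qubit Pauli labels anticommute iff both are non-identity and distinct. -/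
def pauliAnti (p q : Fin 4) : Prop := p ≠ 0 ∧ q ≠ 0 ∧ p ≠ q

instance (p q : Fin 4) : Decidable (pauliAnti p q) :=
  inferInstanceAs (Decidable (p ≠ 0 ∧ q ≠ 0 ∧ p ≠ q))

/-- The number of coordinates at which two Pauli strings anticommute. -/
def pauliN {n : ℕ} (a b : Fin n → Fin 4) : ℕ :=
  (Finset.univ.filter (fun i => pauliAnti (a i) (b i))).card

/-- The symplectic indicator `⟨a,b⟩ ∈ {0,1} ⊆ ℝ`: the parity of `pauliN a b`. -/
def sympInd {n : ℕ} (a b : Fin n → Fin 4) : ℝ := ((pauliN a b % 2 : ℕ) : ℝ)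

/-!
The sign table `χ(a,b) = (-1)^{N(a,b)}` is the `n`-th Kronecker power of the single-qubit table,
whose rows are orthogonal of squared norm `4`. So `Σ_b χ(a,b) χ(c,b) = 4ⁿ δ_{ac}`, and the
transform `x̂ b = Σ_c χ(c,b) x c` is inverted by `Σ_b χ(a,b) x̂ b = 4ⁿ x a`. Since
`⟨a,b⟩ = (χ(0,b) - χ(a,b)) / 2`, the sum `Σ_b ⟨a,b⟩ τ b` is a difference of two such inversions,
namely `x a - x 0`; its term at `b = 0` vanishes because `⟨a,0⟩ = 0`.
-/

section OrthogonalRows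

variable {R ι κ μ E : Type*} [CommSemiring R] [Fintype κ] [DecidableEq μ]
  {χ : μ → κ → R} {d : R}

lemma sum_prod_mul_prod_of_orthogonal_rows [Fintype ι] [DecidableEq ι]
    (hχ : ∀ p q, ∑ r, χ p r * χ q r = if p = q then d else 0) (a c : ι → μ) :
    ∑ b : ι → κ, (∏ i, χ (a i) (b i)) * ∏ i, χ (c i) (b i) =
      if a = c then d ^ Fintype.card ι else 0 := by
  calc ∑ b : ι → κ, (∏ i, χ (a i) (b i)) * ∏ i, χ (c i) (b i)
      = ∏ i, ∑ r, χ (a i) r * χ (c i) r := by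
        simp only [← Finset.prod_mul_distrib, Fintype.prod_sum]
    _ = ∏ i, if a i = c i then d else 0 := by simp only [hχ]
    _ = if a = c then d ^ Fintype.card ι else 0 := by
        split_ifs with hac
        · simp [hac]
        · obtain ⟨i, hi⟩ := Function.ne_iff.mp hac
          exact Finset.prod_eq_zero (Finset.mem_univ i) (if_neg hi)

lemma sum_smul_sum_smul_of_orthogonal_rows [Fintype μ] [AddCommMonoid E] [Module R E]
    (hχ : ∀ p q, ∑ r, χ p r * χ q r = if p = q then d else 0) (x : μ → E) (a : μ) :
    ∑ b, χ a b • ∑ c, χ c b • x c = d • x a := by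
  calc ∑ b, χ a b • ∑ c, χ c b • x c
      = ∑ c, (∑ b, χ a b * χ c b) • x c := by
        simp only [Finset.smul_sum, Finset.sum_smul, smul_smul]
        exact Finset.sum_comm
    _ = d • x a := by simp [hχ]

end OrthogonalRows

section PauliSign

variable {n : ℕ}

/-- The sign `±1` in `P Q = ± Q P` for single-qubit Paulis `P`, `Q` with labels `p`, `q`. It is
integer-valued so that identities between signs are decidable; cast it for use in other rings. -/
def pauliSign (p q : Fin 4) : ℤ := if pauliAnti p q then -1 else 1

lemma sum_pauliSign_mul_pauliSign (p q : Fin 4) :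
    ∑ r, pauliSign p r * pauliSign q r = if p = q then 4 else 0 := by
  decide +revert

lemma neg_one_pow_pauliN (a b : Fin n → Fin 4) :
    (-1 : ℤ) ^ pauliN a b = ∏ i, pauliSign (a i) (b i) := by
  simp [pauliN, pauliSign, Finset.prod_ite]

lemma sum_neg_one_pow_pauliN_mul {R : Type*} [CommRing R] (a c : Fin n → Fin 4) :
    ∑ b, (-1 : R) ^ pauliN a b * (-1) ^ pauliN c b = if a = c then 4 ^ n else 0 := by
  have orthogonal_int :
      ∑ b, (-1 : ℤ) ^ pauliN a b * (-1) ^ pauliN c b = if a = c then 4 ^ n else 0 := by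
    simpa only [neg_one_pow_pauliN, Fintype.card_fin] using
      sum_prod_mul_prod_of_orthogonal_rows sum_pauliSign_mul_pauliSign a c
  simpa using congrArg (Int.cast : ℤ → R) orthogonal_int

lemma pauliN_zero_left (b : Fin n → Fin 4) : pauliN 0 b = 0 := by
  simp [pauliN, pauliAnti]

lemma pauliN_zero_right (a : Fin n → Fin 4) : pauliN a 0 = 0 := by
  simp [pauliN, pauliAnti]

lemma sympInd_zero_right (a : Fin n → Fin 4) : sympInd a 0 = 0 := by
  simp [sympInd, pauliN_zero_right]

lemma sympInd_eq_neg_one_pow_sub_div_two (a b : Fin n → Fin 4) :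
    sympInd a b = ((-1) ^ pauliN 0 b - (-1) ^ pauliN a b) / 2 := by
  rw [sympInd, pauliN_zero_left, neg_one_pow_eq_pow_mod_two (pauliN a b)]
  rcases Nat.mod_two_eq_zero_or_one (pauliN a b) with h | h <;> norm_num [h]

end PauliSign

theorem symplectic_reconstruction_general {n : ℕ} {E : Type*} [AddCommGroup E] [Module ℝ E]
    {x τ : (Fin n → Fin 4) → E}
    (hτ : ∀ b, b ≠ 0 → τ b = -(2 / (4 : ℝ) ^ n) • ∑ a, (-1 : ℝ) ^ pauliN a b • x a)
    (a : Fin n → Fin 4) :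
    ∑ b, sympInd a b • τ b = x a - x 0 := by
  let transform (b : Fin n → Fin 4) : E := ∑ c, (-1 : ℝ) ^ pauliN c b • x c
  have inversion (c : Fin n → Fin 4) :
      ∑ b, (-1 : ℝ) ^ pauliN c b • transform b = (4 : ℝ) ^ n • x c :=
    sum_smul_sum_smul_of_orthogonal_rows sum_neg_one_pow_pauliN_mul x c
  have summand_eq (b : Fin n → Fin 4) : sympInd a b • τ b = ((4 : ℝ) ^ n)⁻¹ •
      ((-1 : ℝ) ^ pauliN a b • transform b - (-1 : ℝ) ^ pauliN 0 b • transform b) := by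
    rcases eq_or_ne b 0 with rfl | hb
    · simp [sympInd_zero_right, pauliN_zero_right]
    · rw [hτ b hb, sympInd_eq_neg_one_pow_sub_div_two]
      module
  calc ∑ b, sympInd a b • τ b
      = ((4 : ℝ) ^ n)⁻¹ • ((4 : ℝ) ^ n • x a - (4 : ℝ) ^ n • x 0) := by
        simp only [summand_eq, ← Finset.smul_sum, Finset.sum_sub_distrib, inversion]
    _ = x a - x 0 := by rw [← smul_sub, inv_smul_smul₀ (by positivity)]

/-- Fourier-type reconstruction: if `x 0 = 0` and `τ` is defined by `τ 0 = 0` and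
`τ b = −(2/4ⁿ) Σ_a (−1)^{N(a,b)} x a` for `b ≠ 0`, then
`Σ_b ⟨a,b⟩ τ b = x a` for every `a`. -/
theorem symplectic_reconstruction (n : ℕ) (x : (Fin n → Fin 4) → ℝ)
    (hx : x 0 = 0) (τ : (Fin n → Fin 4) → ℝ) (hτ0 : τ 0 = 0)
    (hτ : ∀ b, b ≠ 0 → τ b =
      -(2 / (4 : ℝ) ^ n) * ∑ a : Fin n → Fin 4, (-1 : ℝ) ^ (pauliN a b) * x a) :
    ∀ a, (∑ b : Fin n → Fin 4, sympInd a b * τ b) = x a := by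
  intro a
  simpa only [smul_eq_mul, hx, sub_zero] using symplectic_reconstruction_general hτ a
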